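/- Fix 1 ≤ q < ∞. Let f_n : S_n → ℝ be a sequence of class functions whose distributions under P_n converge weakly. Then there is a constant C such that for all n ≥ 2, sup_{a,b ∈ ℝ} |P_n[ρ̄_q(σ) ≤ a, f_n(σ) ≤ b] − P_n[ρ̄_q(σ) ≤ a]·P_n[f_n(σ) ≤ b]| ≤ C (log n)/n^{1/2}. -/

import Mathlib

open scoped BigOperators Classical
open Finset Filter

/-- Probability of an event under the uniform measure on `S_n`. -/
noncomputable def Pn {n : ℕ} (p : Equiv.Perm (Fin n) → Prop) : ℝ :=
  ((Finset.univ.filter p).card : ℝ) / (Fintype.card (Equiv.Perm (Fin n)) : ℝ)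

/-- Expectation under the uniform measure on `S_n`. -/
noncomputable def En {n : ℕ} (g : Equiv.Perm (Fin n) → ℝ) : ℝ :=
  (∑ σ : Equiv.Perm (Fin n), g σ) / (Fintype.card (Equiv.Perm (Fin n)) : ℝ)

/-- Variance under the uniform measure on `S_n`. -/
noncomputable def VarN {n : ℕ} (g : Equiv.Perm (Fin n) → ℝ) : ℝ :=
  En (fun σ => (g σ - En g) ^ 2)

/-- Spearman's metric `ρ_q(σ) = Σ_i |σ(i) − i|^q`. -/
noncomputable def rhoq (q : ℝ) {n : ℕ} (σ : Equiv.Perm (Fin n)) : ℝ :=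
  ∑ i : Fin n, |((σ i : ℕ) : ℝ) - ((i : ℕ) : ℝ)| ^ q

/-- Normalized Spearman's metric `ρ̄_q = (ρ_q − E ρ_q)/√(Var ρ_q)`. -/
noncomputable def rhoqBar (q : ℝ) {n : ℕ} (σ : Equiv.Perm (Fin n)) : ℝ :=
  (rhoq q σ - En (rhoq q (n := n))) / Real.sqrt (VarN (rhoq q (n := n)))

lemma cardpos {n : ℕ} : (0:ℝ) < (Fintype.card (Equiv.Perm (Fin n)) : ℝ) := by
  exact_mod_cast Fintype.card_pos

lemma Pn_eq {n : ℕ} (p : Equiv.Perm (Fin n) → Prop) :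
    Pn p = En (fun σ => if p σ then (1:ℝ) else 0) := by
  simp [Pn, En, Finset.sum_boole]

lemma En_mono {n : ℕ} {g h : Equiv.Perm (Fin n) → ℝ} (H : ∀ σ, g σ ≤ h σ) : En g ≤ En h := by
  unfold En
  exact div_le_div_of_nonneg_right (Finset.sum_le_sum fun σ _ => H σ) cardpos.le

lemma En_add {n : ℕ} (g h : Equiv.Perm (Fin n) → ℝ) :
    En (fun σ => g σ + h σ) = En g + En h := by
  unfold En; rw [Finset.sum_add_distrib, add_div]

lemma En_sub {n : ℕ} (g h : Equiv.Perm (Fin n) → ℝ) :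
    En (fun σ => g σ - h σ) = En g - En h := by
  unfold En; rw [Finset.sum_sub_distrib, sub_div]

lemma En_smul {n : ℕ} (c : ℝ) (g : Equiv.Perm (Fin n) → ℝ) :
    En (fun σ => c * g σ) = c * En g := by
  unfold En; rw [← Finset.mul_sum, mul_div_assoc]

lemma En_const {n : ℕ} (c : ℝ) : En (fun _ : Equiv.Perm (Fin n) => c) = c := by
  unfold En
  have := cardpos (n := n)
  simp only [Finset.sum_const, nsmul_eq_mul, Finset.card_univ]
  field_simp

lemma En_abs {n : ℕ} (g : Equiv.Perm (Fin n) → ℝ) : |En g| ≤ En (fun σ => |g σ|) := by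
  unfold En
  rw [abs_div, abs_of_pos cardpos]
  exact div_le_div_of_nonneg_right (Finset.abs_sum_le_sum_abs _ _) cardpos.le

lemma En_sum {n : ℕ} {ι : Type*} (s : Finset ι) (g : ι → Equiv.Perm (Fin n) → ℝ) :
    En (fun σ => ∑ i ∈ s, g i σ) = ∑ i ∈ s, En (g i) := by
  unfold En; rw [Finset.sum_comm, Finset.sum_div]

lemma En_equiv {n : ℕ} (φ : Equiv.Perm (Fin n) ≃ Equiv.Perm (Fin n))
    (g : Equiv.Perm (Fin n) → ℝ) : En (fun σ => g (φ σ)) = En g := by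
  unfold En; rw [Equiv.sum_comp φ g]

lemma En_comm {n : ℕ} (g : Equiv.Perm (Fin n) → Equiv.Perm (Fin n) → ℝ) :
    En (fun σ => En (fun τ => g σ τ)) = En (fun τ => En (fun σ => g σ τ)) := by
  unfold En
  rw [← Finset.sum_div, ← Finset.sum_div, Finset.sum_comm]

lemma En_succ {n : ℕ} (g : Equiv.Perm (Fin (n+1)) → ℝ) :
    En g = (∑ p : Fin (n+1), En (fun e => g (Equiv.Perm.decomposeFin.symm (p, e)))) / (n+1) := by
  unfold En
  rw [← Finset.sum_div, ← Equiv.sum_comp Equiv.Perm.decomposeFin.symm g, Fintype.sum_prod_type]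
  rw [Fintype.card_perm, Fintype.card_perm, Fintype.card_fin, Fintype.card_fin, Nat.factorial_succ]
  rw [div_div]; push_cast; ring

lemma decomp_eq {n : ℕ} (p : Fin (n+1)) (e : Equiv.Perm (Fin n)) :
    Equiv.Perm.decomposeFin.symm (p, e) =
      Equiv.swap 0 p * Equiv.Perm.decomposeFin.symm (0, e) := by
  ext x
  refine Fin.cases ?_ (fun x => ?_) x <;> simp

lemma decomp_swap {n : ℕ} (x y : Fin n) (e : Equiv.Perm (Fin n)) :
    Equiv.Perm.decomposeFin.symm (0, Equiv.swap x y * e) =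
      Equiv.swap x.succ y.succ * Equiv.Perm.decomposeFin.symm (0, e) := by
  ext z
  refine Fin.cases ?_ (fun z => ?_) z
  · simp [Equiv.swap_apply_of_ne_of_ne (Fin.succ_ne_zero x).symm (Fin.succ_ne_zero y).symm]
  · simp only [Equiv.Perm.decomposeFin_symm_apply_succ, Equiv.Perm.mul_apply, Equiv.swap_self,
      Equiv.refl_apply]
    rw [(Fin.succ_injective n).map_swap]

lemma var_bound (c : ℝ) : ∀ (n : ℕ) (F : Equiv.Perm (Fin n) → ℝ),
    (∀ x y σ, |F (Equiv.swap x y * σ) - F σ| ≤ c) →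
    En (fun σ => (F σ - En F)^2) ≤ 4 * c^2 * n := by
  intro n
  induction n with
  | zero =>
    intro F _
    have : ∀ σ, F σ = F 1 := fun σ => by rw [Subsingleton.elim σ 1]
    have h2 : F = fun _ => F 1 := funext this
    rw [h2, En_const]
    simp [En_const]
  | succ n ih =>
    intro F hF
    set Fp : Fin (n+1) → Equiv.Perm (Fin n) → ℝ :=
      fun p e => F (Equiv.Perm.decomposeFin.symm (p, e)) with hFp
    have h1 : ∀ p, En (fun e => (Fp p e - En (Fp p))^2) ≤ 4 * c^2 * n := by
      intro p
      apply ih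
      intro x y σ
      simp only [hFp]
      rw [decomp_eq p (Equiv.swap x y * σ), decomp_swap, ← mul_assoc,
        Equiv.mul_swap_eq_swap_mul, mul_assoc, ← decomp_eq]
      exact hF _ _ _
    have h2 : ∀ p, |En (Fp p) - En (Fp 0)| ≤ c := by
      intro p
      rw [← En_sub]
      refine (En_abs _).trans ?_
      rw [← En_const (n := n) c]
      apply En_mono
      intro e
      simp only [hFp]
      rw [decomp_eq p]
      exact hF _ _ _
    have hn : (0:ℝ) < n + 1 := by positivity
    have hM : En F = (∑ p, En (Fp p)) / (n+1) := En_succ F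
    have h3 : |En F - En (Fp 0)| ≤ c := by
      have : En F - En (Fp 0) = (∑ p, (En (Fp p) - En (Fp 0))) / (n+1) := by
        rw [hM, Finset.sum_sub_distrib]; simp; field_simp
      rw [this, abs_div, abs_of_pos hn, div_le_iff₀ hn]
      refine (Finset.abs_sum_le_sum_abs _ _).trans ?_
      refine (Finset.sum_le_sum fun p _ => h2 p).trans ?_
      simp; linarith
    rw [En_succ, div_le_iff₀ hn]
    have h4 : ∀ p : Fin (n+1), En (fun e => (Fp p e - En F)^2) ≤ 4 * c^2 * n + 4 * c^2 := by
      intro p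
      have e1 : En (fun e => (Fp p e - En F)^2) =
          En (fun e => (Fp p e - En (Fp p))^2) + (En (Fp p) - En F)^2 := by
        have : (fun e => (Fp p e - En F)^2) = fun e => ((Fp p e - En (Fp p))^2 +
          (2 * (En (Fp p) - En F)) * (Fp p e - En (Fp p))) + (En (Fp p) - En F)^2 := by
          ext e; ring
        rw [this, En_add, En_add, En_smul, En_sub, En_const, En_const]; ring
      rw [e1]
      have : |En (Fp p) - En F| ≤ 2 * c := by
        have a := h2 p
        rw [abs_le] at *
        constructor <;> linarith
      have : (En (Fp p) - En F)^2 ≤ (2*c)^2 := by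
        rw [← sq_abs]; gcongr
      linarith [h1 p]
    refine (Finset.sum_le_sum fun p _ => h4 p).trans ?_
    simp; apply le_of_eq; ring

lemma cycle_approx (n : ℕ) : ∃ K : Equiv.Perm (Fin (n+1)) → ℕ,
    En (fun σ => (K σ : ℝ)) ≤ Real.log (n+1) ∧
    ∀ σ, ∃ c : Equiv.Perm (Fin (n+1)), (∀ x y, c.SameCycle x y) ∧
      (Finset.univ.filter fun i => c i ≠ σ i).card ≤ 2 * K σ := by
  induction n with
  | zero =>
    refine ⟨fun _ => 0, by simp [En_const], fun σ => ⟨σ, fun x y => ?_, by simp⟩⟩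
    obtain rfl : x = y := Fin.ext (by omega)
    exact ⟨0, by simp⟩
  | succ n ih =>
    obtain ⟨K, hK, hc⟩ := ih
    refine ⟨fun σ => K (Equiv.Perm.decomposeFin σ).2 +
      (if (Equiv.Perm.decomposeFin σ).1 = 0 then 1 else 0), ?_, ?_⟩
    · rw [En_succ]
      simp only [Equiv.apply_symm_apply]
      push_cast
      simp only [En_add, En_const, Finset.sum_add_distrib]
      simp only [Finset.sum_const, Finset.card_univ, Fintype.card_fin, Finset.sum_ite_eq',
        Finset.mem_univ, if_true, nsmul_eq_mul]
      have hl := Real.one_sub_inv_le_log_of_pos (x := ((n:ℝ)+1+1)/(n+1)) (by positivity)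
      rw [Real.log_div (by positivity) (by positivity)] at hl
      have : 1 - (((n:ℝ)+1+1)/(n+1))⁻¹ = 1 / (n+1+1) := by field_simp; ring
      rw [this] at hl
      push_cast
      rw [add_div, mul_div_cancel_left₀ _ (by positivity)]
      linarith
    · intro σ
      obtain ⟨⟨p, e⟩, rfl⟩ := Equiv.Perm.decomposeFin.symm.surjective σ
      simp only [Equiv.apply_symm_apply]
      obtain ⟨c, hc1, hc2⟩ := hc e
      have hmain : ∀ p' : Fin (n+2), p' ≠ 0 →
          ∀ x y, (Equiv.Perm.decomposeFin.symm (p', c)).SameCycle x y := by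
        intro p' hp'
        set d := Equiv.Perm.decomposeFin.symm (p', c) with hd
        have d0 : d 0 = p' := by simp [hd]
        have ds : ∀ x : Fin (n+1), d x.succ = Equiv.swap 0 p' (c x).succ := by intro x; simp [hd]
        have step1 : ∀ x, d.SameCycle x (d x) := fun x => ⟨1, by simp⟩
        have step : ∀ x : Fin (n+1), d.SameCycle x.succ (c x).succ := by
          intro x
          by_cases h : (c x).succ = p'
          · have a := step1 x.succ
            rw [ds, h, Equiv.swap_apply_right] at a
            have b := step1 0
            rw [d0] at b
            rw [h]; exact a.trans b
          · have a := step1 x.succ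
            rwa [ds, Equiv.swap_apply_of_ne_of_ne (Fin.succ_ne_zero _) h] at a
        have hpow : ∀ (k : ℕ) (x : Fin (n+1)), d.SameCycle x.succ ((c^k) x).succ := by
          intro k x
          induction k with
          | zero => simp; exact ⟨0, by simp⟩
          | succ k ihk =>
            rw [pow_succ', Equiv.Perm.mul_apply]
            exact ihk.trans (step _)
        have hss : ∀ x y : Fin (n+1), d.SameCycle x.succ y.succ := by
          intro x y
          obtain ⟨k, _, hk⟩ := (hc1 x y).exists_pow_eq'
          rw [← hk]; exact hpow k x
        obtain ⟨z, rfl⟩ := Fin.exists_succ_eq.mpr hp'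
        have h0 : ∀ x : Fin (n+1), d.SameCycle 0 x.succ := by
          intro x
          have b := step1 0
          rw [d0] at b
          exact b.trans (hss z x)
        intro x y
        refine Fin.cases ?_ (fun x => ?_) x <;> refine Fin.cases ?_ (fun y => ?_) y
        · exact ⟨0, by simp⟩
        · exact h0 y
        · exact (h0 x).symm
        · exact hss x y
      by_cases hp : p = 0
      · subst hp
        refine ⟨_, hmain (Fin.succ 0) (Fin.succ_ne_zero _), ?_⟩
        have hsub : (Finset.univ.filter fun i =>
            Equiv.Perm.decomposeFin.symm (Fin.succ 0, c) i ≠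
              Equiv.Perm.decomposeFin.symm (0, e) i) ⊆
            (Finset.univ.filter fun i => c i ≠ e i).image Fin.succ ∪
              {0, (c.symm 0).succ} := by
          intro i
          refine Fin.cases ?_ (fun x => ?_) i
          · simp
          · intro h
            simp only [Finset.mem_filter, Finset.mem_univ, true_and,
              Equiv.Perm.decomposeFin_symm_apply_succ, Equiv.swap_self, Equiv.refl_apply] at h
            simp only [Finset.mem_union, Finset.mem_image, Finset.mem_filter, Finset.mem_univ,
              true_and, Finset.mem_insert, Finset.mem_singleton]
            by_cases h0 : c x = 0
            · right; right; rw [← h0]; simp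
            · left
              refine ⟨x, ?_, rfl⟩
              rw [Equiv.swap_apply_of_ne_of_ne (Fin.succ_ne_zero _)
                (fun h' => h0 (Fin.succ_injective _ h'))] at h
              exact fun h' => h (by rw [h'])
        refine (Finset.card_le_card hsub).trans ((Finset.card_union_le _ _).trans ?_)
        have := (Finset.card_image_le (s := Finset.univ.filter fun i => c i ≠ e i)
          (f := Fin.succ))
        have h2 := Finset.card_le_two (a := (0 : Fin (n+2))) (b := (c.symm 0).succ)
        simp only [if_true]
        omega
      · refine ⟨_, hmain p hp, ?_⟩
        have hsub : (Finset.univ.filter fun i =>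
            Equiv.Perm.decomposeFin.symm (p, c) i ≠
              Equiv.Perm.decomposeFin.symm (p, e) i) ⊆
            (Finset.univ.filter fun i => c i ≠ e i).image Fin.succ := by
          intro i
          refine Fin.cases ?_ (fun x => ?_) i
          · simp
          · intro h
            simpa using h
        refine (Finset.card_le_card hsub).trans (Finset.card_image_le.trans ?_)
        omega

lemma central_bound (k : ℕ) : k.centralBinom^2 * (2*k+1) ≤ 16^k := by
  induction k with
  | zero => simp
  | succ k ih =>
    have h := Nat.succ_mul_centralBinom_succ k
    have h1 : (k+1)^2 * ((k+1).centralBinom^2 * (2*(k+1)+1)) =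
        (4*(2*k+1)*(2*k+3)) * (k.centralBinom^2 * (2*k+1)) := by
      calc _ = ((k+1) * (k+1).centralBinom)^2 * (2*(k+1)+1) := by ring
        _ = _ := by rw [h]; ring
    have h2 : (4*(2*k+1)*(2*k+3)) ≤ 16 * (k+1)^2 := by nlinarith
    have h3 : (k+1)^2 * ((k+1).centralBinom^2 * (2*(k+1)+1)) ≤ (k+1)^2 * 16^(k+1) := by
      rw [h1]
      calc _ ≤ (16 * (k+1)^2) * 16^k := Nat.mul_le_mul h2 ih
        _ = _ := by ring
    exact Nat.le_of_mul_le_mul_left h3 (by positivity)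

lemma choose_mid (g : ℕ) : (g.choose (g/2))^2 * g ≤ 4^g := by
  rcases Nat.even_or_odd' g with ⟨k, rfl | rfl⟩
  · have h := central_bound k
    rw [Nat.centralBinom_eq_two_mul_choose] at h
    rw [Nat.mul_div_cancel_left _ (by norm_num), pow_mul]
    norm_num
    nlinarith
  · have h := central_bound k
    rw [Nat.centralBinom_eq_two_mul_choose] at h
    have e : (2*k+1)/2 = k := by omega
    have e4 : 4^(2*k+1) = 4 * 16^k := by rw [pow_succ, pow_mul]; norm_num; ring
    rw [e, e4]
    have hc : (2*k+1).choose k ≤ 2 * (2*k).choose k := by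
      rcases k with _ | k
      · simp
      · rw [Nat.choose_succ_succ]
        have := Nat.choose_le_middle k (2*(k+1))
        rw [Nat.mul_div_cancel_left _ (by norm_num)] at this
        have e2 : k.succ = k+1 := rfl
        simp only [e2] at *
        omega
    calc ((2*k+1).choose k)^2 * (2*k+1) ≤ (2 * (2*k).choose k)^2 * (2*k+1) := by gcongr
      _ = 4 * (((2*k).choose k)^2 * (2*k+1)) := by ring
      _ ≤ 4 * 16^k := by gcongr

lemma littlewood_offord {ι : Type} [Fintype ι] (D : ι → ℝ) (δ x a : ℝ) :
    ((Finset.univ : Finset (Finset ι)).filter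
      (fun S => a ≤ x + ∑ j ∈ S, D j ∧ x + ∑ j ∈ S, D j < a + δ)).card ≤
    ((Finset.univ.filter fun j => δ ≤ D j).card).choose
        ((Finset.univ.filter fun j => δ ≤ D j).card / 2) *
      2 ^ (Fintype.card ι - (Finset.univ.filter fun j => δ ≤ D j).card) := by
  by_cases hδ : 0 < δ
  swap
  · rw [Finset.filter_false_of_mem]
    · simp
    · rintro S _ ⟨h1, h2⟩; linarith
  set G := Finset.univ.filter fun j => δ ≤ D j with hG
  rw [← Finset.card_compl, ← Finset.card_powerset]
  apply Finset.card_le_mul_card_image_of_maps_to (f := fun S => S ∩ Gᶜ)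
  · intro S _; simp
  · intro R _
    set 𝒜 := (Finset.univ.filter (fun S => a ≤ x + ∑ j ∈ S, D j ∧ x + ∑ j ∈ S, D j < a + δ)).filter
      (fun S => S ∩ Gᶜ = R) with hA
    have hinj : Set.InjOn (fun S : Finset ι => S.subtype (· ∈ G)) (𝒜 : Set (Finset ι)) := by
      intro S hS S' hS' h
      simp only [hA, Finset.coe_filter, Set.mem_ofPred_eq] at hS hS'
      ext j
      by_cases hj : j ∈ G
      · have := Finset.ext_iff.mp h ⟨j, hj⟩
        simpa using this
      · have := Finset.ext_iff.mp (hS.2.trans hS'.2.symm) j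
        simpa [hj] using this
    rw [← Finset.card_image_of_injOn hinj]
    have hanti : IsAntichain (fun x1 x2 => x1 ⊆ x2)
        ((𝒜.image (fun S : Finset ι => S.subtype (· ∈ G)) : Finset (Finset G)) :
          Set (Finset G)) := by
      intro U hU U' hU' hne hsub
      simp only [Finset.coe_image, Set.mem_image, Finset.mem_coe] at hU hU'
      obtain ⟨S, hS, rfl⟩ := hU
      obtain ⟨S', hS', rfl⟩ := hU'
      simp only [hA, Finset.mem_filter, Finset.mem_univ, true_and] at hS hS'
      have hSS : S ⊆ S' := by
        intro j hj
        by_cases hjG : j ∈ G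
        · have := @hsub ⟨j, hjG⟩
          simp at this
          exact this hj
        · have := Finset.ext_iff.mp (hS.2.trans hS'.2.symm) j
          simp [hjG] at this
          exact this.mp hj
      have hSne : S ≠ S' := fun h => hne (by rw [h])
      obtain ⟨j, hj', hj⟩ := Finset.exists_of_ssubset (hSS.ssubset_of_ne hSne)
      have hdiff : ∀ i ∈ S' \ S, δ ≤ D i := by
        intro i hi
        rw [Finset.mem_sdiff] at hi
        by_contra hlt
        have hiG : i ∉ G := by simpa [hG] using hlt
        have := Finset.ext_iff.mp (hS.2.trans hS'.2.symm) i
        simp [hiG] at this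
        exact hi.2 (this.mpr hi.1)
      have h1 : ∑ i ∈ S' \ S, D i + ∑ i ∈ S, D i = ∑ i ∈ S', D i := Finset.sum_sdiff hSS
      have hjm : j ∈ S' \ S := Finset.mem_sdiff.mpr ⟨hj', hj⟩
      have h2 : D j ≤ ∑ i ∈ S' \ S, D i :=
        Finset.single_le_sum (fun i hi => hδ.le.trans (hdiff i hi)) hjm
      have h3 := hdiff j hjm
      linarith [hS.1.1, hS'.1.2]
    have := hanti.sperner
    simpa using this

lemma lo_real {ι : Type} [Fintype ι] (D : ι → ℝ) (δ x a g : ℝ) (hg : 0 < g)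
    (hle : g ≤ (Finset.univ.filter fun j => δ ≤ D j).card) :
    (((Finset.univ : Finset (Finset ι)).filter
      (fun S => a ≤ x + ∑ j ∈ S, D j ∧ x + ∑ j ∈ S, D j < a + δ)).card : ℝ) ≤
    2 ^ (Fintype.card ι) / Real.sqrt g := by
  have h := littlewood_offord D δ x a
  set G := (Finset.univ.filter fun j => δ ≤ D j).card with hG
  have hGle : G ≤ Fintype.card ι := Finset.card_le_univ _
  have hc : ((G.choose (G/2) : ℕ) : ℝ) ≤ 2^G / Real.sqrt g := by
    have h1 : ((G.choose (G/2) : ℕ) : ℝ)^2 * G ≤ 4^G := by exact_mod_cast choose_mid G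
    rw [le_div_iff₀ (Real.sqrt_pos.mpr hg)]
    rw [← pow_le_pow_iff_left₀ (by positivity) (by positivity) two_ne_zero]
    rw [mul_pow, Real.sq_sqrt hg.le, ← pow_mul, mul_comm G 2, pow_mul]
    norm_num
    refine le_trans ?_ h1
    gcongr
  calc _ ≤ ((G.choose (G/2) * 2^(Fintype.card ι - G) : ℕ) : ℝ) := by exact_mod_cast h
    _ = ((G.choose (G/2) : ℕ) : ℝ) * 2^(Fintype.card ι - G) := by push_cast; ring
    _ ≤ 2^G / Real.sqrt g * 2^(Fintype.card ι - G) := by gcongr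
    _ = 2^(G + (Fintype.card ι - G)) / Real.sqrt g := by rw [pow_add]; ring
    _ = _ := by rw [Nat.add_sub_cancel' hGle]

lemma anti_abstract {n : ℕ} {ι : Type} [Fintype ι] (X : Equiv.Perm (Fin n) → ℝ)
    (s : ι → Equiv.Perm (Fin n)) (D : ι → Equiv.Perm (Fin n) → ℝ)
    (hX : ∀ j τ, X (τ * s j) = X τ + D j τ)
    (hD : ∀ i j τ, i ≠ j → D i (τ * s j) = D i τ)
    (δ g : ℝ) (hg : 0 < g) (a : ℝ) :
    Pn (fun τ => a ≤ X τ ∧ X τ < a + δ) ≤ 1 / Real.sqrt g +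
      Pn (fun τ => ((Finset.univ.filter fun j => δ ≤ D j τ).card : ℝ) < g) := by
  have hl : ∀ (l : List ι), l.Nodup → ∀ τ, X (τ * (l.map s).prod) =
      X τ + (l.map fun j => D j τ).sum := by
    intro l
    induction l with
    | nil => intro _ τ; simp
    | cons j l ih =>
      intro hnd τ
      rw [List.nodup_cons] at hnd
      rw [List.map_cons, List.prod_cons, ← mul_assoc, ih hnd.2, hX, List.map_cons, List.sum_cons]
      have : (l.map fun i => D i (τ * s j)) = (l.map fun i => D i τ) := by
        apply List.map_congr_left
        intro i hi
        exact hD i j τ (fun h => hnd.1 (h ▸ hi))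
      rw [this]; ring
  have hS : ∀ (S : Finset ι) τ, X (τ * (S.toList.map s).prod) = X τ + ∑ j ∈ S, D j τ := by
    intro S τ
    rw [hl _ S.nodup_toList, Finset.sum_map_toList]
  have hav : ∀ S : Finset ι, Pn (fun τ => a ≤ X τ ∧ X τ < a + δ) =
      En (fun τ => if a ≤ X τ + ∑ j ∈ S, D j τ ∧ X τ + ∑ j ∈ S, D j τ < a + δ
        then (1:ℝ) else 0) := by
    intro S
    rw [Pn_eq, ← En_equiv (Equiv.mulRight ((S.toList.map s).prod))]
    simp only [Equiv.coe_mulRight, hS]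
  have hsum : 2 ^ (Fintype.card ι) * Pn (fun τ => a ≤ X τ ∧ X τ < a + δ) =
      En (fun τ => (((Finset.univ : Finset (Finset ι)).filter
      (fun S => a ≤ X τ + ∑ j ∈ S, D j τ ∧ X τ + ∑ j ∈ S, D j τ < a + δ)).card : ℝ)) := by
    have : ∑ S : Finset ι, Pn (fun τ => a ≤ X τ ∧ X τ < a + δ) = 2 ^ (Fintype.card ι) *
        Pn (fun τ => a ≤ X τ ∧ X τ < a + δ) := by simp
    rw [← this, Finset.sum_congr rfl (fun S _ => hav S), ← En_sum]
    simp only [Finset.sum_boole]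
  have h2 : (0:ℝ) < 2 ^ (Fintype.card ι) := by positivity
  rw [← mul_le_mul_iff_right₀ h2, hsum, mul_add, Pn_eq, ← En_smul,
    ← En_const (n := n) (2 ^ (Fintype.card ι) * (1 / Real.sqrt g)), ← En_add]
  apply En_mono
  intro τ
  by_cases h : ((Finset.univ.filter fun j => δ ≤ D j τ).card : ℝ) < g
  · rw [if_pos h]
    have h3 : (((Finset.univ : Finset (Finset ι)).filter
      (fun S => a ≤ X τ + ∑ j ∈ S, D j τ ∧ X τ + ∑ j ∈ S, D j τ < a + δ)).card : ℝ) ≤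
        2 ^ (Fintype.card ι) := by
      have := Finset.card_le_univ ((Finset.univ : Finset (Finset ι)).filter
        (fun S => a ≤ X τ + ∑ j ∈ S, D j τ ∧ X τ + ∑ j ∈ S, D j τ < a + δ))
      rw [Fintype.card_finset] at this
      exact_mod_cast this
    have : 0 ≤ (2:ℝ) ^ (Fintype.card ι) * (1 / Real.sqrt g) := by positivity
    linarith
  · rw [if_neg h]
    have := lo_real (fun j => D j τ) δ (X τ) a g hg (not_lt.mp h)
    rw [mul_one_div]; linarith

noncomputable def Tq (q : ℝ) {n : ℕ} (τ : Equiv.Perm (Fin n)) : ℝ :=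
  ∑ i : Fin n, |((τ (finRotate n i) : ℕ) : ℝ) - ((τ i : ℕ) : ℝ)| ^ q

def posn {n : ℕ} (j : Fin (n/4)) (k : Fin 4) : Fin n := ⟨4 * j.val + k.val, by omega⟩

lemma posn_inj {n : ℕ} {j j' : Fin (n/4)} {k k' : Fin 4} (h : posn j k = posn j' k') :
    j = j' ∧ k = k' := by
  simp only [posn, Fin.mk.injEq] at h
  constructor <;> apply Fin.ext <;> omega

lemma rot_posn {n : ℕ} (j : Fin (n/4)) (k k' : Fin 4) (h : k'.val = k.val + 1) :
    finRotate n (posn j k) = posn j k' := by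
  rcases n with _ | n
  · exact absurd j.2 (by simp)
  · have hlt : 4 * j.val + k.val < n := by have := j.2; omega
    have := finRotate_of_lt hlt
    simp only [posn]
    rw [this]
    apply Fin.ext
    simp [h]; ring

noncomputable def Dq (q : ℝ) {n : ℕ} (j : Fin (n/4)) (τ : Equiv.Perm (Fin n)) : ℝ :=
  |((τ (posn j 2) : ℕ) : ℝ) - ((τ (posn j 0) : ℕ) : ℝ)| ^ q
  - |((τ (posn j 1) : ℕ) : ℝ) - ((τ (posn j 0) : ℕ) : ℝ)| ^ q
  + |((τ (posn j 3) : ℕ) : ℝ) - ((τ (posn j 1) : ℕ) : ℝ)| ^ q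
  - |((τ (posn j 3) : ℕ) : ℝ) - ((τ (posn j 2) : ℕ) : ℝ)| ^ q

lemma posn_ne {n : ℕ} {j j' : Fin (n/4)} {k k' : Fin 4} (h : j ≠ j' ∨ k ≠ k') :
    posn j k ≠ posn j' k' := by
  intro h'
  have := posn_inj h'
  tauto

lemma Tq_swap (q : ℝ) {n : ℕ} (j : Fin (n/4)) (τ : Equiv.Perm (Fin n)) :
    Tq q (τ * Equiv.swap (posn j 1) (posn j 2)) = Tq q τ + Dq q j τ := by
  have n01 : posn j 0 ≠ posn j 1 := posn_ne (Or.inr (by decide))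
  have n02 : posn j 0 ≠ posn j 2 := posn_ne (Or.inr (by decide))
  have n12 : posn j 1 ≠ posn j 2 := posn_ne (Or.inr (by decide))
  have n31 : posn j 3 ≠ posn j 1 := posn_ne (Or.inr (by decide))
  have n32 : posn j 3 ≠ posn j 2 := posn_ne (Or.inr (by decide))
  have r0 := rot_posn j 0 1 rfl
  have r1 := rot_posn j 1 2 rfl
  have r2 := rot_posn j 2 3 rfl
  suffices h : Tq q (τ * Equiv.swap (posn j 1) (posn j 2)) - Tq q τ = Dq q j τ by linarith
  unfold Tq
  rw [← Finset.sum_sub_distrib]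
  rw [← Finset.sum_subset (Finset.subset_univ {posn j 0, posn j 1, posn j 2})]
  · rw [Finset.sum_insert (by simp [n01, n02]), Finset.sum_insert (by simp [n12]),
      Finset.sum_singleton]
    simp only [Equiv.Perm.mul_apply, r0, r1, r2, Equiv.swap_apply_left, Equiv.swap_apply_right,
      Equiv.swap_apply_of_ne_of_ne n01 n02, Equiv.swap_apply_of_ne_of_ne n31 n32]
    rw [abs_sub_comm ((τ (posn j 1) : ℕ) : ℝ) ((τ (posn j 2) : ℕ) : ℝ)]
    unfold Dq
    ring
  · intro i _ hi
    simp only [Finset.mem_insert, Finset.mem_singleton, not_or] at hi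
    have h1 : finRotate n i ≠ posn j 1 := by
      rw [← r0]; exact fun h => hi.1 ((finRotate n).injective h)
    have h2 : finRotate n i ≠ posn j 2 := by
      rw [← r1]; exact fun h => hi.2.1 ((finRotate n).injective h)
    simp only [Equiv.Perm.mul_apply, Equiv.swap_apply_of_ne_of_ne hi.2.1 hi.2.2,
      Equiv.swap_apply_of_ne_of_ne h1 h2, sub_self]

lemma Dq_swap (q : ℝ) {n : ℕ} (i j : Fin (n/4)) (τ : Equiv.Perm (Fin n)) (h : i ≠ j) :
    Dq q i (τ * Equiv.swap (posn j 1) (posn j 2)) = Dq q i τ := by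
  have hk : ∀ k, Equiv.swap (posn j 1) (posn j 2) (posn i k) = posn i k := fun k =>
    Equiv.swap_apply_of_ne_of_ne (posn_ne (Or.inl h)) (posn_ne (Or.inl h))
  simp only [Dq, Equiv.Perm.mul_apply, hk]

def stq (n : ℕ) (k : Fin 4) : ℕ :=
  if k = 0 then 0 else if k = 1 then n/16 else if k = 2 then n - 2*(n/16) else n - n/16

def GoodB {n : ℕ} (j : Fin (n/4)) (τ : Equiv.Perm (Fin n)) : Prop :=
  ∀ k : Fin 4, stq n k ≤ (τ (posn j k)).val ∧ (τ (posn j k)).val < stq n k + n/16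

noncomputable def d0 (q : ℝ) : ℝ := 2 * ((3/4:ℝ)^q - (1/8:ℝ)^q)

lemma d0_pos (q : ℝ) (hq : 1 ≤ q) : 0 < d0 q := by
  have := Real.rpow_lt_rpow (x := 1/8) (y := 3/4) (z := q) (by norm_num) (by norm_num) (by linarith)
  unfold d0; linarith

lemma good_D (q : ℝ) (hq : 1 ≤ q) {n : ℕ} (j : Fin (n/4)) (τ : Equiv.Perm (Fin n))
    (h : GoodB j τ) : d0 q * (n:ℝ)^q ≤ Dq q j τ := by
  have h0 := h 0
  have h1 := h 1
  have h2 := h 2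
  have h3 := h 3
  rw [show stq n 0 = 0 by simp [stq]] at h0
  rw [show stq n 1 = n/16 by simp [stq]] at h1
  rw [show stq n 2 = n - 2*(n/16) by simp [stq]] at h2
  rw [show stq n 3 = n - n/16 by simp [stq]] at h3
  have hq0 : 0 ≤ q := by linarith
  have hn : (0:ℝ) ≤ n := by positivity
  unfold Dq
  set v0 := (τ (posn j 0)).val
  set v1 := (τ (posn j 1)).val
  set v2 := (τ (posn j 2)).val
  set v3 := (τ (posn j 3)).val
  have b0 : (v0:ℝ) * 16 ≤ n := by exact_mod_cast (by omega : v0 * 16 ≤ n)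
  have b1 : (v1:ℝ) * 8 ≤ n := by exact_mod_cast (by omega : v1 * 8 ≤ n)
  have b2 : 7 * (n:ℝ) ≤ v2 * 8 := by exact_mod_cast (by omega : 7 * n ≤ v2 * 8)
  have b3 : 7 * (n:ℝ) ≤ v3 * 8 := by exact_mod_cast (by omega : 7 * n ≤ v3 * 8)
  have b4 : (v2:ℝ) ≤ n := by exact_mod_cast (τ (posn j 2)).2.le
  have b5 : (v3:ℝ) ≤ n := by exact_mod_cast (τ (posn j 3)).2.le
  have p0 : (0:ℝ) ≤ v0 := by positivity
  have p1 : (0:ℝ) ≤ v1 := by positivity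
  have hi : ∀ x : ℝ, 3/4 * n ≤ x → (3/4:ℝ)^q * (n:ℝ)^q ≤ |x|^q := by
    intro x hx
    rw [← Real.mul_rpow (by norm_num) hn]
    exact Real.rpow_le_rpow (by positivity) (hx.trans (le_abs_self x)) hq0
  have lo : ∀ x : ℝ, |x| ≤ 1/8 * n → |x|^q ≤ (1/8:ℝ)^q * (n:ℝ)^q := by
    intro x hx
    rw [← Real.mul_rpow (by norm_num) hn]
    exact Real.rpow_le_rpow (abs_nonneg _) hx hq0
  have i1 := hi ((v2:ℝ) - v0) (by linarith)
  have i2 := hi ((v3:ℝ) - v1) (by linarith)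
  have i3 := lo ((v1:ℝ) - v0) (by rw [abs_le]; constructor <;> linarith)
  have i4 := lo ((v3:ℝ) - v2) (by rw [abs_le]; constructor <;> linarith)
  unfold d0
  linarith

noncomputable def Fc {n : ℕ} (τ : Equiv.Perm (Fin n)) : ℝ :=
  ((Finset.univ.filter fun j : Fin (n/4) => GoodB j τ).card : ℝ)

lemma Fc_lip_aux {n : ℕ} (x y : Fin n) (σ τ : Equiv.Perm (Fin n))
    (hst : ∀ z, z ≠ x → z ≠ y → σ z = τ z) : Fc σ ≤ Fc τ + 2 := by
  unfold Fc
  set S := Finset.univ.filter fun j : Fin (n/4) => j.val = x.val/4 ∨ j.val = y.val/4 with hS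
  have hS2 : S.card ≤ 2 := by
    have : S.card ≤ ({x.val/4, y.val/4} : Finset ℕ).card := by
      apply Finset.card_le_card_of_injOn (fun j => j.val)
      · intro j hj
        simpa [hS] using hj
      · intro a _ b _ h
        exact Fin.ext h
    exact this.trans Finset.card_le_two
  have hsub : (Finset.univ.filter fun j : Fin (n/4) => GoodB j σ) ⊆
      (Finset.univ.filter fun j : Fin (n/4) => GoodB j τ) ∪ S := by
    intro j hj
    simp only [Finset.mem_filter, Finset.mem_univ, true_and, Finset.mem_union, hS] at hj ⊢
    by_cases hjS : j.val = x.val/4 ∨ j.val = y.val/4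
    · exact Or.inr hjS
    · left
      intro k
      have : σ (posn j k) = τ (posn j k) := by
        apply hst
        · rintro rfl
          apply hjS; left; simp only [posn]; omega
        · rintro rfl
          apply hjS; right; simp only [posn]; omega
      rw [← this]; exact hj k
  have := (Finset.card_le_card hsub).trans (Finset.card_union_le _ _)
  have h3 : (Finset.univ.filter fun j : Fin (n/4) => GoodB j σ).card ≤
    (Finset.univ.filter fun j : Fin (n/4) => GoodB j τ).card + 2 := by omega
  exact_mod_cast h3

lemma Fc_lip {n : ℕ} (x y : Fin n) (σ : Equiv.Perm (Fin n)) :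
    |Fc (Equiv.swap x y * σ) - Fc σ| ≤ 2 := by
  have h : ∀ z, z ≠ σ.symm x → z ≠ σ.symm y → (Equiv.swap x y * σ) z = σ z := by
    intro z hx hy
    rw [Equiv.Perm.mul_apply, Equiv.swap_apply_of_ne_of_ne]
    · intro h; exact hx (by rw [← h]; simp)
    · intro h; exact hy (by rw [← h]; simp)
  have h1 := Fc_lip_aux _ _ _ _ h
  have h2 := Fc_lip_aux _ _ _ _ (fun z a b => (h z a b).symm)
  rw [abs_le]; constructor <;> linarith

lemma fiber_bound {n : ℕ} (x g : Fin 4 → Fin n) (hg : g.Injective) (hx : x.Injective) :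
    Fintype.card (Equiv.Perm (Fin n)) ≤
      n^4 * (Finset.univ.filter fun τ : Equiv.Perm (Fin n) => ∀ k, τ (x k) = g k).card := by
  have h1 : Fintype.card (Equiv.Perm (Fin n)) =
      ∑ h : Fin 4 → Fin n, (Finset.univ.filter fun τ : Equiv.Perm (Fin n) =>
        (fun k => τ (x k)) = h).card := by
    rw [← Finset.card_univ]
    exact Finset.card_eq_sum_card_fiberwise (fun _ _ => by simp)
  rw [h1]
  have h2 : ∀ h : Fin 4 → Fin n, (Finset.univ.filter fun τ : Equiv.Perm (Fin n) =>
        (fun k => τ (x k)) = h).card ≤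
      (Finset.univ.filter fun τ : Equiv.Perm (Fin n) => ∀ k, τ (x k) = g k).card := by
    intro h
    by_cases hne : ∃ τ : Equiv.Perm (Fin n), (fun k => τ (x k)) = h
    · obtain ⟨τ, rfl⟩ := hne
      obtain ⟨π, hπ⟩ := (MulAction.isMultiplyPretransitive_iff.mp
        (Equiv.Perm.isMultiplyPretransitive (Fin n) 4))
        ⟨fun k => τ (x k), τ.injective.comp hx⟩ ⟨g, hg⟩
      have hπ' : ∀ k, π (τ (x k)) = g k := by
        intro k
        have := DFunLike.congr_fun hπ k
        simpa using this
      apply Finset.card_le_card_of_injOn (fun τ' => π * τ')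
      · intro τ' h'
        simp only [Finset.coe_filter, Finset.mem_univ, true_and, Set.mem_ofPred_eq] at h' ⊢
        intro k
        have := congrFun h' k
        rw [Equiv.Perm.mul_apply, this, hπ']
      · intro a _ b _ hab
        exact mul_left_cancel hab
    · rw [Finset.filter_false_of_mem]
      · simp
      · intro τ _ h'; exact hne ⟨τ, h'⟩
  refine (Finset.sum_le_sum fun h _ => h2 h).trans ?_
  simp

lemma good_prob {n : ℕ} (j : Fin (n/4)) :
    ((n/16 : ℕ) : ℝ)^4 ≤ (n:ℝ)^4 * Pn (fun τ : Equiv.Perm (Fin n) => GoodB j τ) := by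
  unfold Pn
  rw [mul_div_assoc', le_div_iff₀ cardpos]
  have hst : ∀ (k : Fin 4) (u : Fin (n/16)), stq n k + u.val < n := by
    intro k u
    have := u.2
    unfold stq
    split_ifs <;> omega
  set gu : (Fin 4 → Fin (n/16)) → Fin 4 → Fin n := fun u k => ⟨stq n k + (u k).val, hst k (u k)⟩
    with hgu
  have hgi : ∀ u, (gu u).Injective := by
    intro u k k' h
    simp only [hgu, Fin.mk.injEq] at h
    have a := (u k).2
    have b := (u k').2
    generalize (u k).val = A at *
    generalize (u k').val = B at *
    unfold stq at h
    fin_cases k <;> fin_cases k' <;> simp at h ⊢ <;> omega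
  have hx : (posn j).Injective := fun k k' h => (posn_inj h).2
  have hfib := fun u => fiber_bound (posn j) (gu u) (hgi u) hx
  have hbi : (Finset.univ.biUnion fun u : Fin 4 → Fin (n/16) =>
      Finset.univ.filter fun τ : Equiv.Perm (Fin n) => ∀ k, τ (posn j k) = gu u k) ⊆
      Finset.univ.filter fun τ : Equiv.Perm (Fin n) => GoodB j τ := by
    intro τ hτ
    simp only [Finset.mem_biUnion, Finset.mem_filter, Finset.mem_univ, true_and] at hτ ⊢
    obtain ⟨u, hu⟩ := hτ
    intro k
    rw [hu k]
    simp [hgu]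
  have hcard := Finset.card_le_card hbi
  rw [Finset.card_biUnion] at hcard
  · have h1 : ∑ u : Fin 4 → Fin (n/16), Fintype.card (Equiv.Perm (Fin n)) ≤
        n^4 * (Finset.univ.filter fun τ : Equiv.Perm (Fin n) => GoodB j τ).card := by
      calc _ ≤ ∑ u, n^4 * _ := Finset.sum_le_sum fun u _ => hfib u
        _ = n^4 * _ := by rw [← Finset.mul_sum]
        _ ≤ _ := Nat.mul_le_mul_left _ hcard
    simp only [Finset.sum_const, Finset.card_univ, Fintype.card_fun, Fintype.card_fin,
      smul_eq_mul] at h1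
    exact_mod_cast h1
  · intro u _ u' _ hne
    rw [Function.onFun, Finset.disjoint_left]
    intro τ h h'
    simp only [Finset.mem_filter, Finset.mem_univ, true_and] at h h'
    apply hne
    ext k
    have := (h k).symm.trans (h' k)
    simpa [hgu] using this

lemma EF_bound {n : ℕ} (hn : 16 ≤ n) : (n:ℝ) / 2^23 ≤ En (Fc (n := n)) := by
  have h1 : En (Fc (n := n)) = ∑ j : Fin (n/4), Pn (fun τ : Equiv.Perm (Fin n) => GoodB j τ) := by
    simp only [Pn_eq]
    rw [← En_sum]
    simp only [Finset.sum_boole]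
    rfl
  have hn0 : (0:ℝ) < n := by exact_mod_cast (by omega : 0 < n)
  have h2 : ∀ j : Fin (n/4), (1:ℝ)/2^20 ≤ Pn (fun τ : Equiv.Perm (Fin n) => GoodB j τ) := by
    intro j
    have h := good_prob j
    have hr : (n:ℝ)/32 ≤ ((n/16 : ℕ) : ℝ) := by
      rw [div_le_iff₀ (by norm_num)]
      exact_mod_cast (by omega : n ≤ n/16*32)
    have h3 : ((n:ℝ)/32)^4 ≤ ((n/16 : ℕ) : ℝ)^4 := by gcongr
    have h4 := h3.trans h
    have h5 : ((n:ℝ)/32)^4 = (n:ℝ)^4 * (1/2^20) := by rw [div_pow]; norm_num; ring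
    rw [h5] at h4
    exact le_of_mul_le_mul_left h4 (by positivity)
  rw [h1]
  have hm : (n:ℝ)/8 ≤ ((n/4 : ℕ) : ℝ) := by
    rw [div_le_iff₀ (by norm_num)]
    exact_mod_cast (by omega : n ≤ n/4*8)
  calc (n:ℝ)/2^23 = (n/8) * (1/2^20) := by ring
    _ ≤ ((n/4 : ℕ) : ℝ) * (1/2^20) := by gcongr
    _ = ∑ j : Fin (n/4), (1:ℝ)/2^20 := by simp
    _ ≤ _ := Finset.sum_le_sum fun j _ => h2 j

lemma Pn_le_one {n : ℕ} (p : Equiv.Perm (Fin n) → Prop) : Pn p ≤ 1 := by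
  rw [Pn_eq]
  refine (En_mono (h := fun _ => 1) ?_).trans (En_const 1).le
  intro σ; split_ifs <;> norm_num

lemma Pn_nonneg {n : ℕ} (p : Equiv.Perm (Fin n) → Prop) : 0 ≤ Pn p := by
  unfold Pn; positivity

lemma Pn_mono {n : ℕ} {p p' : Equiv.Perm (Fin n) → Prop} (h : ∀ σ, p σ → p' σ) : Pn p ≤ Pn p' := by
  rw [Pn_eq, Pn_eq]
  apply En_mono; intro σ
  by_cases hp : p σ
  · simp [hp, h σ hp]
  · simp only [hp, if_false]; split_ifs <;> norm_num

lemma anti_T (q : ℝ) (hq : 1 ≤ q) : ∃ C : ℝ, 0 < C ∧ ∀ n : ℕ, 1 ≤ n → ∀ a : ℝ,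
    Pn (fun τ : Equiv.Perm (Fin n) => a ≤ Tq q τ ∧ Tq q τ < a + d0 q * (n:ℝ)^q) ≤
      C / Real.sqrt n := by
  refine ⟨2^12 + 2^52, by positivity, ?_⟩
  intro n hn1 a
  have hn0 : (0:ℝ) < n := by exact_mod_cast hn1
  have hs : 0 < Real.sqrt n := Real.sqrt_pos.mpr hn0
  have hs1 : 1 ≤ Real.sqrt n := by rw [Real.one_le_sqrt]; exact_mod_cast hn1
  by_cases hn : 16 ≤ n
  swap
  · refine (Pn_le_one _).trans ?_
    rw [le_div_iff₀ hs]
    have : Real.sqrt n ≤ 4 := by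
      rw [Real.sqrt_le_left (by norm_num)]
      norm_num
      exact_mod_cast (by omega : n ≤ 16)
    linarith [show (4:ℝ) ≤ 2^12 + 2^52 by norm_num]
  have hE := EF_bound hn
  have hV := var_bound 2 n Fc Fc_lip
  have hA := anti_abstract (Tq q) (fun j : Fin (n/4) => Equiv.swap (posn j 1) (posn j 2)) (Dq q)
    (fun j τ => Tq_swap q j τ) (fun i j τ h => Dq_swap q i j τ h) (d0 q * (n:ℝ)^q)
    ((n:ℝ)/2^24) (by positivity) a
  refine hA.trans ?_
  rw [add_div]
  apply add_le_add
  · rw [Real.sqrt_div hn0.le, show (2:ℝ)^24 = (2^12)^2 by norm_num, Real.sqrt_sq (by norm_num),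
      one_div_div]
  · have h1 : Pn (fun τ : Equiv.Perm (Fin n) =>
        ((Finset.univ.filter fun j => d0 q * (n:ℝ)^q ≤ Dq q j τ).card : ℝ) < (n:ℝ)/2^24) ≤
        Pn (fun τ : Equiv.Perm (Fin n) => Fc τ < (n:ℝ)/2^24) := by
      apply Pn_mono
      intro τ h
      refine lt_of_le_of_lt ?_ h
      unfold Fc
      have : (Finset.univ.filter fun j : Fin (n/4) => GoodB j τ).card ≤
          (Finset.univ.filter fun j => d0 q * (n:ℝ)^q ≤ Dq q j τ).card := by
        apply Finset.card_le_card
        intro j hj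
        simp only [Finset.mem_filter, Finset.mem_univ, true_and] at hj ⊢
        exact good_D q hq j τ hj
      exact_mod_cast this
    refine h1.trans ?_
    have h2 : ((n:ℝ)/2^24)^2 * Pn (fun τ : Equiv.Perm (Fin n) => Fc τ < (n:ℝ)/2^24) ≤
        En (fun σ : Equiv.Perm (Fin n) => (Fc σ - En (Fc (n := n)))^2) := by
      rw [Pn_eq, ← En_smul]
      apply En_mono
      intro σ
      split_ifs with h
      · rw [mul_one, ← sq_abs (Fc σ - En (Fc (n := n)))]
        have : (n:ℝ)/2^24 ≤ |Fc σ - En (Fc (n := n))| := by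
          rw [abs_sub_comm]
          refine le_trans ?_ (le_abs_self _)
          have : (n:ℝ)/2^23 = n/2^24 + n/2^24 := by ring
          linarith
        gcongr
      · rw [mul_zero]; positivity
    have h3 := h2.trans hV
    have h4 : (n:ℝ) * Pn (fun τ : Equiv.Perm (Fin n) => Fc τ < (n:ℝ)/2^24) ≤ 2^52 := by
      have : (n:ℝ) * ((n:ℝ) * Pn (fun τ : Equiv.Perm (Fin n) => Fc τ < (n:ℝ)/2^24)) ≤
          n * 2^52 := by
        have h5 := mul_le_mul_of_nonneg_left h3 (show (0:ℝ) ≤ 2^48 by norm_num)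
        calc _ = 2^48 * (((n:ℝ)/2^24)^2 *
              Pn (fun τ : Equiv.Perm (Fin n) => Fc τ < (n:ℝ)/2^24)) := by ring
          _ ≤ _ := h5
          _ = _ := by ring
      exact le_of_mul_le_mul_left this hn0
    rw [le_div_iff₀ hs]
    have h6 : Real.sqrt n ≤ n := by
      nlinarith [Real.mul_self_sqrt hn0.le]
    have := Pn_nonneg (fun τ : Equiv.Perm (Fin n) => Fc τ < (n:ℝ)/2^24)
    nlinarith

lemma Pn_cover (q : ℝ) (hq : 1 ≤ q) : ∃ C : ℝ, 0 < C ∧ ∀ n : ℕ, 1 ≤ n → ∀ a w : ℝ, 0 ≤ w →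
    Pn (fun τ : Equiv.Perm (Fin n) => |Tq q τ - a| ≤ w * (n:ℝ)^q) ≤
      C * (w + 1) / Real.sqrt n := by
  obtain ⟨C, hC, hT⟩ := anti_T q hq
  have hd := d0_pos q hq
  refine ⟨C * (2 / d0 q + 1), by positivity, ?_⟩
  intro n hn a w hw
  have hn0 : (0:ℝ) < n := by exact_mod_cast hn
  have hnq : 0 < (n:ℝ)^q := Real.rpow_pos_of_pos hn0 q
  have hs : 0 < Real.sqrt n := Real.sqrt_pos.mpr hn0
  set δ := d0 q * (n:ℝ)^q with hδ
  have hδp : 0 < δ := by positivity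
  set N := ⌊2 * w / d0 q⌋₊ + 1 with hN
  set b := a - w * (n:ℝ)^q with hb
  have h1 : Pn (fun τ : Equiv.Perm (Fin n) => |Tq q τ - a| ≤ w * (n:ℝ)^q) ≤
      ∑ i ∈ Finset.range N, Pn (fun τ : Equiv.Perm (Fin n) =>
        (b + i * δ) ≤ Tq q τ ∧ Tq q τ < (b + i * δ) + δ) := by
    simp only [Pn_eq]
    rw [← En_sum]
    apply En_mono
    intro τ
    have hnn : ∀ i ∈ Finset.range N, (0:ℝ) ≤ @ite ℝ ((b + i * δ) ≤ Tq q τ ∧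
        Tq q τ < (b + i * δ) + δ) (Classical.propDecidable _) 1 0 := by
      intro i _; split_ifs <;> norm_num
    by_cases h : |Tq q τ - a| ≤ w * (n:ℝ)^q
    · rw [if_pos h]
      rw [abs_le] at h
      set t := (Tq q τ - b) / δ with ht
      have ht0 : 0 ≤ t := div_nonneg (by linarith) hδp.le
      have htw : t ≤ 2 * w / d0 q := by
        rw [ht, div_le_div_iff₀ hδp hd, hδ]
        nlinarith
      have hT : Tq q τ = b + t * δ := by rw [ht]; field_simp; ring
      have hmem : ⌊t⌋₊ ∈ Finset.range N := by
        rw [Finset.mem_range, hN]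
        exact Nat.lt_succ_of_le (Nat.floor_le_floor htw)
      refine le_trans ?_ (Finset.single_le_sum hnn hmem)
      rw [if_pos]
      have f1 := Nat.floor_le ht0
      have f2 := Nat.lt_floor_add_one t
      constructor
      · rw [hT]; gcongr
      · rw [hT]; nlinarith
    · rw [if_neg h]; exact Finset.sum_nonneg hnn
  refine h1.trans ((Finset.sum_le_sum fun i _ => hT n hn _).trans ?_)
  rw [Finset.sum_const, Finset.card_range, nsmul_eq_mul, mul_div_assoc']
  apply div_le_div_of_nonneg_right _ hs.le
  have hNle : (N:ℝ) ≤ 2 * w / d0 q + 1 := by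
    rw [hN]; push_cast
    linarith [Nat.floor_le (show 0 ≤ 2 * w / d0 q by positivity)]
  have : (N:ℝ) ≤ (2 / d0 q + 1) * (w + 1) := by
    refine hNle.trans ?_
    have : (2 / d0 q + 1) * (w + 1) = 2 * w / d0 q + 1 + (2 / d0 q + w) := by ring
    rw [this]
    have : 0 ≤ 2 / d0 q + w := by positivity
    linarith
  nlinarith

lemma rhoq_conj (q : ℝ) {n : ℕ} (σ τ : Equiv.Perm (Fin n)) :
    rhoq q (τ * σ * τ⁻¹) = ∑ i : Fin n, |((τ (σ i) : ℕ) : ℝ) - ((τ i : ℕ) : ℝ)| ^ q := by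
  unfold rhoq
  rw [← Equiv.sum_comp τ]
  simp

lemma isConj_rot {n : ℕ} (hn : 2 ≤ n) (c : Equiv.Perm (Fin n)) (hc : ∀ x y, c.SameCycle x y) :
    IsConj (finRotate n) c := by
  have hne : ∀ x, c x ≠ x := by
    intro x hx
    have : ∀ y, y = x := by
      intro y
      obtain ⟨k, _, hk⟩ := (hc x y).exists_pow_eq'
      rw [← hk, Equiv.Perm.pow_apply_eq_self_of_apply_eq_self hx]
    have h0 := this ⟨0, by omega⟩
    have h1 := this ⟨1, by omega⟩
    have := h0.trans h1.symm
    simp at this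
  have hcyc : c.IsCycle := ⟨⟨0, by omega⟩, hne _, fun y _ => hc _ _⟩
  apply (isCycle_finRotate_of_le hn).isConj hcyc
  rw [support_finRotate_of_le hn]
  congr 1
  ext x
  simp [hne x]

lemma cond_bound (q : ℝ) (hq : 1 ≤ q) : ∃ C : ℝ, 0 < C ∧ ∀ n : ℕ, 2 ≤ n →
    ∀ (σ c : Equiv.Perm (Fin n)) (K : ℕ), (∀ x y, c.SameCycle x y) →
      (Finset.univ.filter fun i => c i ≠ σ i).card ≤ 2 * K → ∀ a : ℝ,
      |Pn (fun τ : Equiv.Perm (Fin n) => rhoq q (τ * σ * τ⁻¹) ≤ a) -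
        Pn (fun τ : Equiv.Perm (Fin n) => Tq q τ ≤ a)| ≤ C * (2 * K + 1) / Real.sqrt n := by
  obtain ⟨C, hC, hcov⟩ := Pn_cover q hq
  refine ⟨C, hC, ?_⟩
  intro n hn σ c K hc hK a
  have hq0 : 0 ≤ q := by linarith
  obtain ⟨π, hπ⟩ := isConj_iff.mp (isConj_rot hn c hc)
  have hTc : ∀ τ, rhoq q (τ * c * τ⁻¹) = Tq q (τ * π) := by
    intro τ
    have : τ * c * τ⁻¹ = (τ * π) * finRotate n * (τ * π)⁻¹ := by rw [← hπ]; group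
    rw [this, rhoq_conj]; rfl
  have hterm : ∀ x y : Fin n, |((x : ℕ) : ℝ) - ((y : ℕ) : ℝ)|^q ≤ (n:ℝ)^q := by
    intro x y
    apply Real.rpow_le_rpow (abs_nonneg _) _ hq0
    have hx : ((x:ℕ):ℝ) ≤ n := by exact_mod_cast x.2.le
    have hy : ((y:ℕ):ℝ) ≤ n := by exact_mod_cast y.2.le
    have hx0 : (0:ℝ) ≤ ((x:ℕ):ℝ) := by positivity
    have hy0 : (0:ℝ) ≤ ((y:ℕ):ℝ) := by positivity
    rw [abs_le]; constructor <;> linarith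
  have hterm0 : ∀ x y : Fin n, 0 ≤ |((x : ℕ) : ℝ) - ((y : ℕ) : ℝ)|^q := fun x y => by positivity
  have hdiff : ∀ τ, |rhoq q (τ * σ * τ⁻¹) - Tq q (τ * π)| ≤ (2 * K) * (n:ℝ)^q := by
    intro τ
    rw [← hTc, rhoq_conj, rhoq_conj, ← Finset.sum_sub_distrib]
    rw [← Finset.sum_subset (Finset.subset_univ (Finset.univ.filter fun i => c i ≠ σ i))]
    · refine (Finset.abs_sum_le_sum_abs _ _).trans ?_
      have : ∀ i ∈ Finset.univ.filter (fun i => c i ≠ σ i),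
          |(|((τ (σ i) : ℕ) : ℝ) - ((τ i : ℕ) : ℝ)| ^ q -
            |((τ (c i) : ℕ) : ℝ) - ((τ i : ℕ) : ℝ)| ^ q)| ≤ (n:ℝ)^q := by
        intro i _
        have h1 := hterm (τ (σ i)) (τ i)
        have h2 := hterm (τ (c i)) (τ i)
        have h3 := hterm0 (τ (σ i)) (τ i)
        have h4 := hterm0 (τ (c i)) (τ i)
        rw [abs_le]; constructor <;> linarith
      refine (Finset.sum_le_sum this).trans ?_
      rw [Finset.sum_const, nsmul_eq_mul]
      have : ((Finset.univ.filter fun i => c i ≠ σ i).card : ℝ) ≤ 2 * K := by exact_mod_cast hK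
      gcongr
    · intro i _ hi
      simp only [Finset.mem_filter, Finset.mem_univ, true_and, not_not] at hi
      rw [hi]; simp
  have e1 : Pn (fun τ : Equiv.Perm (Fin n) => Tq q τ ≤ a) =
      Pn (fun τ : Equiv.Perm (Fin n) => Tq q (τ * π) ≤ a) := by
    rw [Pn_eq, Pn_eq, ← En_equiv (Equiv.mulRight π)]; rfl
  have e2 : Pn (fun τ : Equiv.Perm (Fin n) => |Tq q τ - a| ≤ (2 * K) * (n:ℝ)^q) =
      Pn (fun τ : Equiv.Perm (Fin n) => |Tq q (τ * π) - a| ≤ (2 * K) * (n:ℝ)^q) := by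
    rw [Pn_eq, Pn_eq, ← En_equiv (Equiv.mulRight π)]; rfl
  refine le_trans ?_ (hcov n (by omega) a (2 * K) (by positivity))
  rw [e1, e2]
  simp only [Pn_eq]
  rw [← En_sub]
  refine (En_abs _).trans (En_mono ?_)
  intro τ
  have hd := hdiff τ
  by_cases h : |Tq q (τ * π) - a| ≤ (2 * K) * (n:ℝ)^q
  · rw [if_pos h]
    split_ifs <;> norm_num
  · rw [if_neg h]
    have : rhoq q (τ * σ * τ⁻¹) ≤ a ↔ Tq q (τ * π) ≤ a := by
      rw [abs_le] at hd
      rw [not_le, lt_abs] at h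
      constructor
      · intro h1; by_contra h2; rcases h with h | h <;> linarith
      · intro h1; by_contra h2; rcases h with h | h <;> linarith
    simp [this]

lemma class_bound (q : ℝ) (hq : 1 ≤ q) : ∃ C : ℝ, 0 < C ∧ ∀ n : ℕ, 2 ≤ n →
    ∀ (A : Equiv.Perm (Fin n) → Prop), (∀ τ σ, A (τ * σ * τ⁻¹) ↔ A σ) → ∀ a : ℝ,
      |Pn (fun σ : Equiv.Perm (Fin n) => rhoq q σ ≤ a ∧ A σ) -
        Pn (fun τ : Equiv.Perm (Fin n) => Tq q τ ≤ a) * Pn A| ≤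
          C * Real.log n / Real.sqrt n := by
  obtain ⟨C, hC, hb⟩ := cond_bound q hq
  have hl2 : 0 < Real.log 2 := Real.log_pos (by norm_num)
  refine ⟨C * (2 + 1 / Real.log 2), by positivity, ?_⟩
  intro n hn A hA a
  have hex : ∃ K : Equiv.Perm (Fin n) → ℕ, En (fun σ => (K σ : ℝ)) ≤ Real.log n ∧
      ∀ σ, ∃ c : Equiv.Perm (Fin n), (∀ x y, c.SameCycle x y) ∧
        (Finset.univ.filter fun i => c i ≠ σ i).card ≤ 2 * K σ := by
    rcases n with _ | m
    · omega
    · have := cycle_approx m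
      push_cast
      exact this
  obtain ⟨K, hK', hc⟩ := hex
  have hn0 : (0:ℝ) < n := by exact_mod_cast (by omega : 0 < n)
  have hs : 0 < Real.sqrt n := Real.sqrt_pos.mpr hn0
  set t := Pn (fun τ : Equiv.Perm (Fin n) => Tq q τ ≤ a) with ht
  have e1 : Pn (fun σ : Equiv.Perm (Fin n) => rhoq q σ ≤ a ∧ A σ) =
      En (fun σ => (if A σ then (1:ℝ) else 0) *
        Pn (fun τ : Equiv.Perm (Fin n) => rhoq q (τ * σ * τ⁻¹) ≤ a)) := by
    have h1 : ∀ τ : Equiv.Perm (Fin n), Pn (fun σ : Equiv.Perm (Fin n) => rhoq q σ ≤ a ∧ A σ) =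
        En (fun σ : Equiv.Perm (Fin n) => (if A σ then (1:ℝ) else 0) *
          (if rhoq q (τ * σ * τ⁻¹) ≤ a then (1:ℝ) else 0)) := by
      intro τ
      rw [Pn_eq, ← En_equiv (MulAut.conj τ).toEquiv]
      congr 1
      ext σ
      have : (MulAut.conj τ).toEquiv σ = τ * σ * τ⁻¹ := rfl
      rw [this, hA]
      by_cases h1 : A σ <;> by_cases h2 : rhoq q (τ * σ * τ⁻¹) ≤ a <;> simp [h1, h2]
    have h2 := En_const (n := n) (Pn (fun σ : Equiv.Perm (Fin n) => rhoq q σ ≤ a ∧ A σ))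
    rw [← h2, funext h1, En_comm]
    congr 1
    ext σ
    rw [En_smul, Pn_eq]
  rw [e1, Pn_eq A, ← En_smul, ← En_sub]
  refine (En_abs _).trans ?_
  have hpt : ∀ σ : Equiv.Perm (Fin n), |(if A σ then (1:ℝ) else 0) *
        Pn (fun τ : Equiv.Perm (Fin n) => rhoq q (τ * σ * τ⁻¹) ≤ a) -
        t * (if A σ then (1:ℝ) else 0)| ≤ C / Real.sqrt n * (2 * K σ + 1) := by
    intro σ
    obtain ⟨c, hc1, hc2⟩ := hc σ
    have h := hb n hn σ c (K σ) hc1 hc2 a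
    have e : C * (2 * (K σ : ℝ) + 1) / Real.sqrt n = C / Real.sqrt n * (2 * K σ + 1) := by ring
    rw [e] at h
    split_ifs
    · simpa using h
    · simp; positivity
  refine (En_mono hpt).trans ?_
  rw [En_smul, En_add, En_smul, En_const]
  have hln : Real.log 2 ≤ Real.log n := Real.log_le_log (by norm_num) (by exact_mod_cast hn)
  have h1 : 1 ≤ 1 / Real.log 2 * Real.log n := by
    rw [div_mul_eq_mul_div, one_mul, le_div_iff₀ hl2]; linarith
  have h2 : 2 * En (fun σ => (K σ : ℝ)) + 1 ≤ (2 + 1 / Real.log 2) * Real.log n := by linarith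
  calc C / Real.sqrt n * (2 * En (fun σ => (K σ : ℝ)) + 1)
      ≤ C / Real.sqrt n * ((2 + 1 / Real.log 2) * Real.log n) := by gcongr
    _ = _ := by ring

/-- Any weakly convergent sequence of class functions is asymptotically independent of
the normalized Spearman metric `ρ̄_q`, at rate `log n / √n`. -/
theorem rhoqBar_asymp_indep_classFun (q : ℝ) (hq : 1 ≤ q)
    (f : ∀ n : ℕ, Equiv.Perm (Fin n) → ℝ)
    (hclass : ∀ n : ℕ, ∀ a σ : Equiv.Perm (Fin n), f n (a * σ * a⁻¹) = f n σ)
    (hweak : ∃ μ : MeasureTheory.Measure ℝ, MeasureTheory.IsProbabilityMeasure μ ∧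
      ∀ g : ℝ → ℝ, Continuous g → (∃ C : ℝ, ∀ x, |g x| ≤ C) →
        Tendsto (fun n : ℕ => En (fun σ => g (f n σ))) atTop (nhds (∫ x, g x ∂μ))) :
    ∃ C : ℝ, ∀ n : ℕ, 2 ≤ n → ∀ a b : ℝ,
      |Pn (fun σ : Equiv.Perm (Fin n) => rhoqBar q σ ≤ a ∧ f n σ ≤ b) -
        Pn (fun σ : Equiv.Perm (Fin n) => rhoqBar q σ ≤ a) *
          Pn (fun σ : Equiv.Perm (Fin n) => f n σ ≤ b)| ≤
        C * Real.log n / Real.sqrt n := by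
  obtain ⟨C, hC, hb⟩ := class_bound q hq
  refine ⟨2 * C, ?_⟩
  intro n hn a b
  have hn1 : (1:ℝ) ≤ n := by exact_mod_cast (by omega : 1 ≤ n)
  have hpos : 0 ≤ 2 * C * Real.log n / Real.sqrt n := by
    have := Real.log_nonneg hn1
    positivity
  rcases (Real.sqrt_nonneg (VarN (rhoq q (n := n)))).eq_or_lt with h0 | h0
  · have hz : ∀ σ : Equiv.Perm (Fin n), rhoqBar q σ = 0 := by
      intro σ; unfold rhoqBar; rw [← h0, div_zero]
    simp only [hz]
    by_cases ha : 0 ≤ a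
    · have : Pn (fun _ : Equiv.Perm (Fin n) => True) = 1 := by
        rw [Pn_eq]; simp [En_const]
      simpa [ha, this] using hpos
    · have : Pn (fun _ : Equiv.Perm (Fin n) => False) = 0 := by
        rw [Pn_eq]; simp [En_const]
      simpa [ha, this] using hpos
  · set a' := a * Real.sqrt (VarN (rhoq q (n := n))) + En (rhoq q (n := n)) with ha'
    have hiff : ∀ σ : Equiv.Perm (Fin n), rhoqBar q σ ≤ a ↔ rhoq q σ ≤ a' := by
      intro σ
      unfold rhoqBar
      rw [div_le_iff₀ h0, ha']
      constructor <;> intro h <;> linarith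
    simp only [hiff]
    have h1 := hb n hn (fun σ => f n σ ≤ b) (fun τ σ => by rw [hclass]) a'
    have h2 := hb n hn (fun _ => True) (fun τ σ => Iff.rfl) a'
    have hT : Pn (fun _ : Equiv.Perm (Fin n) => True) = 1 := by
      rw [Pn_eq]; simp [En_const]
    simp only [and_true, hT, mul_one] at h2
    have p0 := Pn_nonneg (fun σ : Equiv.Perm (Fin n) => f n σ ≤ b)
    have p1 := Pn_le_one (fun σ : Equiv.Perm (Fin n) => f n σ ≤ b)
    set P := Pn (fun σ : Equiv.Perm (Fin n) => f n σ ≤ b)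
    set R := Pn (fun σ : Equiv.Perm (Fin n) => rhoq q σ ≤ a')
    set t := Pn (fun τ : Equiv.Perm (Fin n) => Tq q τ ≤ a')
    set Q := Pn (fun σ : Equiv.Perm (Fin n) => rhoq q σ ≤ a' ∧ f n σ ≤ b)
    have e : Q - R * P = (Q - t * P) - (R - t) * P := by ring
    rw [e]
    refine (abs_sub _ _).trans ?_
    have h3 : |(R - t) * P| ≤ |R - t| := by
      rw [abs_mul, abs_of_nonneg p0]
      exact mul_le_of_le_one_right (abs_nonneg _) p1
    have e2 : 2 * C * Real.log n / Real.sqrt n =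
      C * Real.log n / Real.sqrt n + C * Real.log n / Real.sqrt n := by ring
    rw [e2]
    linarith
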